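/- Let W : ℝ² → ℝ be smooth, doubly 2π-periodic and symmetric, and let φ : ℝ² → ℝ be a nonzero smooth, doubly 2π-periodic, symmetric function with −Δφ + Wφ = 0. Assume (a) ∫(|∇v|² + W v²) dxdy ≥ 0 for every smooth, doubly 2π-periodic, symmetric v : ℝ² → ℝ, and (b) every smooth, doubly 2π-periodic, symmetric solution v of −Δv + Wv = 0 is a real scalar multiple of φ. Then there exists δ > 0 such that ∫(|∇v|² + W v²) dxdy ≥ δ ∫ v² dxdy for every smooth, doubly 2π-periodic, symmetric v : ℝ² → ℝ satisfying ∫ vφ dxdy = 0. -/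

import Mathlib

/-!
The proof is by contradiction and compactness, carried out on cosine coefficients so that no
Sobolev spaces are needed. If no `δ` works, there are smooth symmetric periodic `vₙ`, orthogonal to
`φ`, with `∫ vₙ² = 1` and energy `qf W vₙ → 0`; `no_minimising` shows that this is impossible.

The cosine coefficients of the `vₙ` are bounded, hence converge, along a nonprincipal ultrafilter,
to some bounded family `c`. By Parseval (`parseval`) the pairing of `vₙ` with any fixed smooth
symmetric periodic function converges as well. Since the energy form is nonnegative, it satisfies
the Cauchy–Schwarz inequality (`schr_cauchy`), so the pairings of `vₙ` with `(-Δ + W) e_k` tend to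
zero for every cosine mode `e_k`: the family `c` solves `-ΔV + WV = 0` in frequency space.

Elliptic regularity is the lemma `bootstrap`: the coefficients of `W` decay rapidly, and with
Peetre's inequality (`peetre`) the equation turns each decay rate of `c` into a better one. Hence
`V = ∑ c_k e_k` is smooth (`RapidDecay.sps`) and lies in the kernel, so it is a multiple of `φ`.
It is also orthogonal to `φ`, so `V = 0` and `c = 0`. On the other hand the energy bound controls
`∫ |∇vₙ|²`, so a fixed finite set of modes carries at least half of the mass of every `vₙ`
(`low_modes`), and this survives in the limit: `c ≠ 0`, a contradiction.
-/

noncomputable section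
open Real MeasureTheory Filter

/-- doubly 2π-periodic -/
def DblPeriodic (u : ℝ → ℝ → ℝ) : Prop :=
  ∀ x y : ℝ, u (x + 2*π) y = u x y ∧ u x (y + 2*π) = u x y

/-- symmetric: even in each variable separately -/
def SymFun (u : ℝ → ℝ → ℝ) : Prop :=
  ∀ x y : ℝ, u (-x) y = u x y ∧ u x (-y) = u x y

/-- smooth as a function on ℝ² -/
def Smooth2 (u : ℝ → ℝ → ℝ) : Prop :=
  ContDiff ℝ (⊤ : ℕ∞) fun p : ℝ × ℝ => u p.1 p.2

/-- the Laplacian Δu = u_xx + u_yy -/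
def lap (u : ℝ → ℝ → ℝ) (x y : ℝ) : ℝ :=
  deriv (fun t => deriv (fun s => u s y) t) x + deriv (fun t => deriv (fun s => u x s) t) y

/-- integral over the fundamental square [0,2π] × [0,2π] -/
def integ2 (f : ℝ → ℝ → ℝ) : ℝ :=
  ∫ x in (0:ℝ)..(2*π), ∫ y in (0:ℝ)..(2*π), f x y

/-- partial derivative in the first variable -/
def pdx (u : ℝ → ℝ → ℝ) (x y : ℝ) : ℝ := deriv (fun s => u s y) x

/-- partial derivative in the second variable -/
def pdy (u : ℝ → ℝ → ℝ) (x y : ℝ) : ℝ := deriv (fun s => u x s) y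

/-- the functional B_c(u) = (1/2)∫(|∇u|² + c u²) dxdy -/
def Bc (c : ℝ) (u : ℝ → ℝ → ℝ) : ℝ :=
  (1/2) * integ2 (fun x y => (pdx u x y)^2 + (pdy u x y)^2 + c * (u x y)^2)

/-! ### Integration over the square -/

/-- The fundamental square `[0,2π] × [0,2π]`. -/
def sqr : Set (ℝ × ℝ) := Set.Icc 0 (2*π) ×ˢ Set.Icc 0 (2*π)

/-- Joint continuity of a curried function of two variables. -/
def Cont2 (f : ℝ → ℝ → ℝ) : Prop := Continuous fun p : ℝ × ℝ => f p.1 p.2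

lemma sqr_compact : IsCompact sqr := isCompact_Icc.prod isCompact_Icc

lemma Cont2.integrableOn {f : ℝ → ℝ → ℝ} (hf : Cont2 f) :
    IntegrableOn (fun p : ℝ × ℝ => f p.1 p.2) sqr volume :=
  ContinuousOn.integrableOn_compact sqr_compact (Continuous.continuousOn hf)

lemma Smooth2.cont2 {f : ℝ → ℝ → ℝ} (hf : Smooth2 f) : Cont2 f := ContDiff.continuous hf

lemma Cont2.mul {f g : ℝ → ℝ → ℝ} (hf : Cont2 f) (hg : Cont2 g) :
    Cont2 (fun x y => f x y * g x y) := Continuous.mul hf hg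

lemma Cont2.add {f g : ℝ → ℝ → ℝ} (hf : Cont2 f) (hg : Cont2 g) :
    Cont2 (fun x y => f x y + g x y) := Continuous.add hf hg

lemma Cont2.const_mul {f : ℝ → ℝ → ℝ} (hf : Cont2 f) (c : ℝ) :
    Cont2 (fun x y => c * f x y) := Continuous.mul continuous_const hf

lemma Cont2.fst {f : ℝ → ℝ → ℝ} (hf : Cont2 f) (y : ℝ) : Continuous fun x => f x y :=
  Continuous.comp (g := fun p : ℝ × ℝ => f p.1 p.2) hf (by fun_prop : Continuous fun x => (x, y))

lemma Cont2.snd {f : ℝ → ℝ → ℝ} (hf : Cont2 f) (x : ℝ) : Continuous fun y => f x y :=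
  Continuous.comp (g := fun p : ℝ × ℝ => f p.1 p.2) hf (by fun_prop : Continuous fun y => (x, y))

lemma Cont2.flip {f : ℝ → ℝ → ℝ} (hf : Cont2 f) : Cont2 (fun x y => f y x) :=
  Continuous.comp (g := fun p : ℝ × ℝ => f p.1 p.2) hf continuous_swap

lemma integ2_eq {f : ℝ → ℝ → ℝ} (hf : Cont2 f) :
    integ2 f = ∫ p in sqr, f p.1 p.2 := by
  have h0 : (0:ℝ) ≤ 2*π := by positivity
  have h := setIntegral_prod (μ := (volume : Measure ℝ)) (ν := (volume : Measure ℝ))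
    (fun p : ℝ × ℝ => f p.1 p.2) hf.integrableOn
  unfold integ2
  simp only [intervalIntegral.integral_of_le h0, ← integral_Icc_eq_integral_Ioc]
  exact h.symm

lemma integ2_add {f g : ℝ → ℝ → ℝ} (hf : Cont2 f) (hg : Cont2 g) :
    integ2 (fun x y => f x y + g x y) = integ2 f + integ2 g := by
  rw [integ2_eq hf, integ2_eq hg, integ2_eq (hf.add hg)]
  exact integral_add hf.integrableOn hg.integrableOn

lemma integ2_const_mul (c : ℝ) (f : ℝ → ℝ → ℝ) :
    integ2 (fun x y => c * f x y) = c * integ2 f := by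
  simp [integ2]

lemma integ2_mono {f g : ℝ → ℝ → ℝ} (hf : Cont2 f) (hg : Cont2 g)
    (h : ∀ x y, f x y ≤ g x y) : integ2 f ≤ integ2 g := by
  rw [integ2_eq hf, integ2_eq hg]
  exact integral_mono hf.integrableOn hg.integrableOn fun p => h p.1 p.2

lemma integ2_const (c : ℝ) : integ2 (fun _ _ => c) = 4*π^2*c := by
  simp [integ2]; ring

lemma integ2_flip {f : ℝ → ℝ → ℝ} (hf : Cont2 f) :
    integ2 (fun x y => f y x) = integ2 f := by
  unfold integ2
  refine intervalIntegral_intervalIntegral_swap ?_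
  have h : IntegrableOn (fun p : ℝ × ℝ => f p.2 p.1)
      (Set.uIcc 0 (2*π) ×ˢ Set.uIcc 0 (2*π)) volume :=
    ContinuousOn.integrableOn_compact (isCompact_uIcc.prod isCompact_uIcc)
      (Continuous.continuousOn hf.flip)
  exact h.mono_set (Set.prod_mono Set.uIoc_subset_uIcc Set.uIoc_subset_uIcc)

/-! ### Partial derivatives and integration by parts -/

lemma Smooth2.flip {f : ℝ → ℝ → ℝ} (hf : Smooth2 f) : Smooth2 (fun x y => f y x) :=
  ContDiff.comp (g := fun p : ℝ × ℝ => f p.1 p.2) hf (by fun_prop : ContDiff ℝ _ fun p : ℝ × ℝ => (p.2, p.1))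

lemma Smooth2.fst {f : ℝ → ℝ → ℝ} (hf : Smooth2 f) (y : ℝ) :
    ContDiff ℝ (⊤ : ℕ∞) fun x => f x y :=
  ContDiff.comp (g := fun p : ℝ × ℝ => f p.1 p.2) hf (by fun_prop : ContDiff ℝ _ fun x => (x, y))

lemma Smooth2.pdx_hasDerivAt {f : ℝ → ℝ → ℝ} (hf : Smooth2 f) (x y : ℝ) :
    HasDerivAt (fun s => f s y) (pdx f x y) x :=
  ((hf.fst y).differentiable (by simp)).differentiableAt.hasDerivAt

lemma Smooth2.pdx_eq_fderiv {f : ℝ → ℝ → ℝ} (hf : Smooth2 f) (x y : ℝ) :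
    pdx f x y = fderiv ℝ (fun p : ℝ × ℝ => f p.1 p.2) (x, y) (1, 0) := by
  have h1 : HasFDerivAt (fun p : ℝ × ℝ => f p.1 p.2) _ (x, y) :=
    (ContDiff.differentiable hf (by simp)).differentiableAt.hasFDerivAt
  have h2 : HasDerivAt (fun s : ℝ => (s, y)) ((1, 0) : ℝ × ℝ) x :=
    (hasDerivAt_id x).prodMk (hasDerivAt_const x y)
  exact (h1.comp_hasDerivAt x h2).deriv

lemma Smooth2.pdx {f : ℝ → ℝ → ℝ} (hf : Smooth2 f) : Smooth2 (pdx f) := by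
  have : (fun p : ℝ × ℝ => _root_.pdx f p.1 p.2) =
      fun p : ℝ × ℝ => fderiv ℝ (fun p : ℝ × ℝ => f p.1 p.2) p (1, 0) := by
    funext p; exact hf.pdx_eq_fderiv p.1 p.2
  unfold Smooth2
  rw [this]
  exact (ContDiff.fderiv_right (m := (⊤ : ℕ∞)) hf (by simp)).clm_apply contDiff_const

lemma Smooth2.pdy {f : ℝ → ℝ → ℝ} (hf : Smooth2 f) : Smooth2 (pdy f) :=
  hf.flip.pdx.flip

lemma DblPeriodic.flip {f : ℝ → ℝ → ℝ} (hf : DblPeriodic f) : DblPeriodic (fun x y => f y x) :=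
  fun x y => ⟨(hf y x).2, (hf y x).1⟩

lemma SymFun.flip {f : ℝ → ℝ → ℝ} (hf : SymFun f) : SymFun (fun x y => f y x) :=
  fun x y => ⟨(hf y x).2, (hf y x).1⟩

lemma DblPeriodic.pdx {f : ℝ → ℝ → ℝ} (hf : DblPeriodic f) : DblPeriodic (pdx f) := by
  intro x y
  refine ⟨?_, ?_⟩
  · have := deriv_comp_add_const (fun s => f s y) (2*π) x
    simp only [fun s => (hf s y).1] at this
    exact this.symm
  · simp only [_root_.pdx, fun s => (hf s y).2]

lemma SymFun.pdx_pdx {f : ℝ → ℝ → ℝ} (hf : SymFun f) : SymFun (pdx (pdx f)) := by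
  have h1 : ∀ x y, pdx f (-x) y = - pdx f x y := by
    intro x y
    have := deriv_comp_neg (fun s => f s y) x
    simp only [fun s => (hf s y).1] at this
    simp only [pdx]
    linarith
  intro x y
  refine ⟨?_, ?_⟩
  · have h2 := deriv_comp_neg (fun s => pdx f s y) x
    have h3 : (fun s => pdx f (-s) y) = fun s => - pdx f s y := by funext s; exact h1 s y
    simp only [h3, deriv.fun_neg] at h2
    simp only [pdx] at h2 ⊢
    linarith
  · simp only [pdx, fun s => (hf s y).2]

/-- Integration by parts in the first variable; periodicity kills the boundary terms. -/
lemma ibp_x {u w : ℝ → ℝ → ℝ} (hu : Smooth2 u) (hup : DblPeriodic u)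
    (hw : Smooth2 w) (hwp : DblPeriodic w) :
    integ2 (fun x y => pdx u x y * w x y) = - integ2 (fun x y => u x y * pdx w x y) := by
  rw [← integ2_flip (hu.pdx.cont2.mul hw.cont2), ← integ2_flip (hu.cont2.mul hw.pdx.cont2)]
  unfold integ2
  rw [← intervalIntegral.integral_neg]
  congr 1
  funext y
  have h := intervalIntegral.integral_mul_deriv_eq_deriv_mul (a := 0) (b := 2*π)
    (fun x _ => hu.pdx_hasDerivAt x y) (fun x _ => hw.pdx_hasDerivAt x y)
    ((hu.pdx.cont2.fst y).intervalIntegrable _ _) ((hw.pdx.cont2.fst y).intervalIntegrable _ _)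
  have e1 := (hup 0 y).1
  have e2 := (hwp 0 y).1
  rw [zero_add] at e1 e2
  rw [e1, e2] at h
  linarith

/-- Integration by parts in the second variable. -/
lemma ibp_y {u w : ℝ → ℝ → ℝ} (hu : Smooth2 u) (hup : DblPeriodic u)
    (hw : Smooth2 w) (hwp : DblPeriodic w) :
    integ2 (fun x y => pdy u x y * w x y) = - integ2 (fun x y => u x y * pdy w x y) := by
  rw [← integ2_flip (hu.pdy.cont2.mul hw.cont2), ← integ2_flip (hu.cont2.mul hw.pdy.cont2)]
  exact ibp_x hu.flip hup.flip hw.flip hwp.flip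

/-! ### The space of smooth symmetric periodic functions -/

/-- Smooth, doubly `2π`-periodic and symmetric functions. -/
structure SPS (u : ℝ → ℝ → ℝ) : Prop where
  smooth : Smooth2 u
  per : DblPeriodic u
  sym : SymFun u

lemma SPS.cont {u : ℝ → ℝ → ℝ} (h : SPS u) : Cont2 u := h.smooth.cont2

lemma SPS.add {u w : ℝ → ℝ → ℝ} (hu : SPS u) (hw : SPS w) : SPS (fun x y => u x y + w x y) where
  smooth := ContDiff.add hu.smooth hw.smooth
  per x y := by simp [hu.per x y, hw.per x y]
  sym x y := by simp [hu.sym x y, hw.sym x y]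

lemma SPS.mul {u w : ℝ → ℝ → ℝ} (hu : SPS u) (hw : SPS w) : SPS (fun x y => u x y * w x y) where
  smooth := ContDiff.mul hu.smooth hw.smooth
  per x y := by simp [hu.per x y, hw.per x y]
  sym x y := by simp [hu.sym x y, hw.sym x y]

lemma SPS.const_mul {u : ℝ → ℝ → ℝ} (hu : SPS u) (c : ℝ) : SPS (fun x y => c * u x y) where
  smooth := ContDiff.mul contDiff_const hu.smooth
  per x y := by simp [hu.per x y]
  sym x y := by simp [hu.sym x y]

lemma SPS.flip {u : ℝ → ℝ → ℝ} (hu : SPS u) : SPS (fun x y => u y x) :=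
  ⟨hu.smooth.flip, hu.per.flip, hu.sym.flip⟩

lemma SPS.pdx_pdx {u : ℝ → ℝ → ℝ} (hu : SPS u) : SPS (pdx (pdx u)) :=
  ⟨hu.smooth.pdx.pdx, hu.per.pdx.pdx, hu.sym.pdx_pdx⟩

lemma SPS.pdy_pdy {u : ℝ → ℝ → ℝ} (hu : SPS u) : SPS (pdy (pdy u)) :=
  hu.flip.pdx_pdx.flip

lemma SPS.lap {u : ℝ → ℝ → ℝ} (hu : SPS u) : SPS (lap u) := hu.pdx_pdx.add hu.pdy_pdy

/-- The `L²` pairing over the fundamental square. -/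
def pr (f g : ℝ → ℝ → ℝ) : ℝ := integ2 fun x y => f x y * g x y

lemma pr_comm (f g : ℝ → ℝ → ℝ) : pr f g = pr g f := by
  unfold pr; congr; funext x y; ring

lemma pr_add_left {f g h : ℝ → ℝ → ℝ} (hf : Cont2 f) (hg : Cont2 g) (hh : Cont2 h) :
    pr (fun x y => f x y + g x y) h = pr f h + pr g h := by
  unfold pr
  rw [← integ2_add (hf.mul hh) (hg.mul hh)]
  congr; funext x y; ring

lemma pr_add_right {f g h : ℝ → ℝ → ℝ} (hf : Cont2 f) (hg : Cont2 g) (hh : Cont2 h) :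
    pr h (fun x y => f x y + g x y) = pr h f + pr h g := by
  rw [pr_comm, pr_add_left hf hg hh, pr_comm f, pr_comm g]

lemma pr_const_mul_left (c : ℝ) (f h : ℝ → ℝ → ℝ) :
    pr (fun x y => c * f x y) h = c * pr f h := by
  unfold pr
  rw [← integ2_const_mul]
  congr; funext x y; ring

lemma pr_const_mul_right (c : ℝ) (f h : ℝ → ℝ → ℝ) :
    pr h (fun x y => c * f x y) = c * pr h f := by
  rw [pr_comm, pr_const_mul_left, pr_comm]

/-- Green's identity on the torus. -/
lemma green {u w : ℝ → ℝ → ℝ} (hu : SPS u) (hw : SPS w) :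
    integ2 (fun x y => pdx u x y * pdx w x y + pdy u x y * pdy w x y) = - pr u (lap w) := by
  rw [integ2_add (hu.smooth.pdx.cont2.mul hw.smooth.pdx.cont2)
    (hu.smooth.pdy.cont2.mul hw.smooth.pdy.cont2),
    ibp_x hu.smooth hu.per hw.smooth.pdx hw.per.pdx,
    ibp_y hu.smooth hu.per hw.smooth.pdy hw.per.flip.pdx.flip]
  have : pr u (lap w) = pr u (pdx (pdx w)) + pr u (pdy (pdy w)) :=
    pr_add_right hw.pdx_pdx.cont hw.pdy_pdy.cont hu.cont
  rw [this]; unfold pr; ring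

lemma pr_lap_comm {u w : ℝ → ℝ → ℝ} (hu : SPS u) (hw : SPS w) :
    pr (lap u) w = pr u (lap w) := by
  have h1 := green hu hw
  have h2 := green hw hu
  have : integ2 (fun x y => pdx u x y * pdx w x y + pdy u x y * pdy w x y) =
      integ2 (fun x y => pdx w x y * pdx u x y + pdy w x y * pdy u x y) := by
    congr; funext x y; ring
  rw [pr_comm]; linarith

/-! ### Cosine modes -/

/-- The cosine mode `cos (m x) cos (n y)` with `k = (m, n)`. Letting `m` and `n` run through all
integers (so that each mode is repeated) makes all normalising constants equal to `1/(4π²)`. -/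
def ee (k : ℤ × ℤ) (x y : ℝ) : ℝ := cos (k.1 * x) * cos (k.2 * y)

/-- The frequency weight `1 + |k|²`, the symbol of `1 - Δ`. -/
def rho (k : ℤ × ℤ) : ℝ := 1 + (k.1 : ℝ)^2 + (k.2 : ℝ)^2

lemma rho_ge_one (k : ℤ × ℤ) : 1 ≤ rho k := by unfold rho; nlinarith [sq_nonneg (k.1:ℝ), sq_nonneg (k.2:ℝ)]

lemma rho_pos (k : ℤ × ℤ) : 0 < rho k := lt_of_lt_of_le one_pos (rho_ge_one k)

lemma cos_int_periodic (m : ℤ) (x : ℝ) : cos (m * (x + 2*π)) = cos (m * x) := by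
  rw [mul_add]; exact Real.cos_add_int_mul_two_pi _ m

lemma ee_sps (k : ℤ × ℤ) : SPS (ee k) where
  smooth := by unfold Smooth2 ee; fun_prop
  per x y := by simp only [ee, cos_int_periodic, and_self]
  sym x y := by simp [ee]

lemma ee_abs_le (k : ℤ × ℤ) (x y : ℝ) : |ee k x y| ≤ 1 := by
  unfold ee
  rw [abs_mul]
  exact mul_le_one₀ (abs_cos_le_one _) (abs_nonneg _) (abs_cos_le_one _)

lemma deriv_deriv_cos (m c x : ℝ) :
    deriv (fun t => deriv (fun s => cos (m * s) * c) t) x = - m^2 * (cos (m * x) * c) := by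
  have h1 : ∀ t, HasDerivAt (fun s => cos (m * s) * c) (-sin (m * t) * (m * 1) * c) t := fun t =>
    (((hasDerivAt_id t).const_mul m).cos).mul_const c
  have h2 : HasDerivAt (fun t => -sin (m * t) * (m * 1) * c)
      (-(cos (m * x) * (m * 1)) * (m * 1) * c) x :=
    ((((hasDerivAt_id x).const_mul m).sin).neg.mul_const (m * 1)).mul_const c
  simp only [fun t => (h1 t).deriv]
  rw [h2.deriv]; ring

lemma lap_ee (k : ℤ × ℤ) (x y : ℝ) : lap (ee k) x y = - (rho k - 1) * ee k x y := by
  unfold lap ee rho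
  rw [deriv_deriv_cos]
  simp only [mul_comm (cos (k.1 * x))]
  rw [deriv_deriv_cos]
  ring

/-- The operator `1 - Δ` acts on cosine coefficients as multiplication by `1 + |k|²`. -/
lemma pr_one_sub_lap_ee {g : ℝ → ℝ → ℝ} (hg : SPS g) (k : ℤ × ℤ) :
    pr (fun x y => g x y + (-1) * lap g x y) (ee k) = rho k * pr g (ee k) := by
  have h : lap (ee k) = fun x y => - (rho k - 1) * ee k x y := by funext x y; exact lap_ee k x y
  rw [pr_add_left hg.cont (hg.lap.const_mul _).cont (ee_sps k).cont, pr_const_mul_left,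
    pr_lap_comm hg (ee_sps k), h, pr_const_mul_right]
  ring

lemma Cont2.bounded {f : ℝ → ℝ → ℝ} (hf : Cont2 f) :
    ∃ C, 0 ≤ C ∧ ∀ p ∈ sqr, |f p.1 p.2| ≤ C := by
  obtain ⟨C, hC⟩ := sqr_compact.exists_bound_of_continuousOn (Continuous.continuousOn hf)
  exact ⟨max C 0, le_max_right _ _, fun p hp => (hC p hp).trans (le_max_left _ _)⟩

lemma Cont2.abs {f : ℝ → ℝ → ℝ} (hf : Cont2 f) : Cont2 (fun x y => |f x y|) :=
  Continuous.abs hf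

lemma abs_integ2_le {f : ℝ → ℝ → ℝ} (hf : Cont2 f) :
    |integ2 f| ≤ integ2 (fun x y => |f x y|) := by
  rw [integ2_eq hf, integ2_eq hf.abs]
  exact abs_integral_le_integral_abs

lemma abs_pr_ee_le {f : ℝ → ℝ → ℝ} (hf : Cont2 f) (k : ℤ × ℤ) :
    |pr f (ee k)| ≤ integ2 (fun x y => |f x y|) := by
  have hc := hf.mul (ee_sps k).cont
  refine (abs_integ2_le hc).trans (integ2_mono hc.abs hf.abs fun x y => ?_)
  rw [abs_mul]
  exact mul_le_of_le_one_right (abs_nonneg _) (ee_abs_le k x y)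

/-- Cosine coefficients of smooth symmetric periodic functions decay faster than any power. -/
lemma coeff_decay (N : ℕ) : ∀ {g : ℝ → ℝ → ℝ}, SPS g →
    ∃ C, 0 ≤ C ∧ ∀ k, rho k ^ N * |pr g (ee k)| ≤ C := by
  induction N with
  | zero =>
    intro g hg
    refine ⟨_, le_trans (abs_nonneg _) (abs_pr_ee_le hg.cont 0), fun k => ?_⟩
    simpa using abs_pr_ee_le hg.cont k
  | succ N ih =>
    intro g hg
    obtain ⟨C, hC0, hC⟩ := ih (hg.add (hg.lap.const_mul (-1)))
    refine ⟨C, hC0, fun k => ?_⟩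
    have := hC k
    rw [pr_one_sub_lap_ee hg, abs_mul, abs_of_pos (rho_pos k)] at this
    calc rho k ^ (N+1) * |pr g (ee k)| = rho k ^ N * (rho k * |pr g (ee k)|) := by ring
      _ ≤ C := this

lemma summable_int_inv_one_add_sq : Summable fun m : ℤ => (1 + (m:ℝ)^2)⁻¹ := by
  have h : Summable fun n : ℕ => (1 + (n:ℝ)^2)⁻¹ := by
    refine Summable.of_norm_bounded_eventually_nat (g := fun n : ℕ => 1 / (n:ℝ)^2)
      (Real.summable_one_div_nat_pow.mpr one_lt_two) ?_
    filter_upwards [eventually_gt_atTop 0] with n hn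
    have : (0:ℝ) < n := by exact_mod_cast hn
    rw [Real.norm_of_nonneg (by positivity), one_div]
    gcongr
    linarith
  refine Summable.of_nat_of_neg ?_ ?_
  · simpa using h
  · simpa using h

lemma summable_rho : Summable fun k : ℤ × ℤ => (rho k ^ 2)⁻¹ := by
  refine Summable.of_nonneg_of_le (fun k => by have := rho_pos k; positivity) (fun k => ?_)
    (summable_int_inv_one_add_sq.mul_of_nonneg summable_int_inv_one_add_sq
      (fun m => by positivity) (fun m => by positivity))
  rw [← mul_inv]
  refine inv_anti₀ (by positivity) ?_
  unfold rho
  nlinarith [sq_nonneg (k.1:ℝ), sq_nonneg (k.2:ℝ), mul_nonneg (sq_nonneg (k.1:ℝ)) (sq_nonneg (k.2:ℝ))]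

lemma summable_of_decay {c : ℤ × ℤ → ℝ} {C : ℝ} (h : ∀ k, rho k ^ 2 * |c k| ≤ C) :
    Summable fun k => |c k| := by
  refine Summable.of_nonneg_of_le (fun k => abs_nonneg _) (fun k => ?_)
    (summable_rho.mul_left C)
  have := rho_pos k
  rw [← div_eq_mul_inv, le_div_iff₀ (by positivity), mul_comm]
  exact h k

/-! ### Cosine expansion -/

lemma integral_even_mul_sin {f : ℝ → ℝ} (hp : ∀ x, f (x + 2*π) = f x)
    (he : ∀ x, f (-x) = f x) (m : ℤ) : ∫ t in (0:ℝ)..2*π, f t * sin (m * t) = 0 := by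
  have hper : Function.Periodic (fun t => f t * sin (m * t)) (2*π) := by
    intro t
    simp only [hp, mul_add]
    rw [Real.sin_add_int_mul_two_pi]
  have h1 := hper.intervalIntegral_add_eq 0 (-(2*π))
  have h2 := intervalIntegral.integral_comp_neg (a := 0) (b := 2*π) (fun t => f t * sin (m * t))
  simp only [he, mul_neg, sin_neg, intervalIntegral.integral_neg, neg_zero] at h2
  simp only [zero_add, neg_add_cancel] at h1
  linarith

/-- Fourier expansion of an even periodic function of one variable, in real form. -/
lemma hasSum_cos_1d {f : ℝ → ℝ} (hf : Continuous f) (hp : ∀ x, f (x + 2*π) = f x)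
    (he : ∀ x, f (-x) = f x)
    (hs : Summable fun m : ℤ => ∫ t in (0:ℝ)..2*π, f t * cos (m * t)) (x : ℝ) :
    HasSum (fun m : ℤ => (2*π)⁻¹ * (∫ t in (0:ℝ)..2*π, f t * cos (m * t)) * cos (m * x)) (f x) := by
  have : Fact (0 < 2*π) := ⟨by positivity⟩
  have hper : Function.Periodic (fun x => (f x : ℂ)) (2*π) := fun x => by simp [hp x]
  let F : C(AddCircle (2*π), ℂ) :=
    ⟨hper.lift, continuous_coinduced_dom.mpr (Complex.continuous_ofReal.comp hf)⟩
  have hFx : ∀ x : ℝ, F (x : AddCircle (2*π)) = f x := fun x => rfl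
  have hcexp : ∀ (m : ℤ) (t : ℝ), (fourier m (t : AddCircle (2*π)) : ℂ) =
      (cos (m * t) : ℂ) + (sin (m * t) : ℂ) * Complex.I := by
    intro m t
    rw [fourier_coe_apply, Complex.ofReal_cos, Complex.ofReal_sin, ← Complex.exp_mul_I]
    congr 1
    have : (π:ℂ) ≠ 0 := by exact_mod_cast Real.pi_ne_zero
    push_cast
    field_simp
  have hcoef : ∀ m : ℤ, fourierCoeff F m =
      (((2*π)⁻¹ * (∫ t in (0:ℝ)..2*π, f t * cos (m * t)) : ℝ) : ℂ) := by
    intro m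
    rw [fourierCoeff_eq_intervalIntegral _ m 0]
    have h1 : ∀ t : ℝ, (fourier (-m) (t : AddCircle (2*π)) : ℂ) • F (t : AddCircle (2*π)) =
        ((f t * cos (m * t) : ℝ) : ℂ) - ((f t * sin (m * t) : ℝ) : ℂ) * Complex.I := by
      intro t
      rw [hcexp, hFx]
      push_cast
      simp only [neg_mul, Complex.cos_neg, Complex.sin_neg, smul_eq_mul]
      ring
    simp only [h1, zero_add]
    rw [intervalIntegral.integral_sub, intervalIntegral.integral_mul_const,
      intervalIntegral.integral_ofReal, intervalIntegral.integral_ofReal,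
      integral_even_mul_sin hp he]
    · simp
    · exact (Continuous.intervalIntegrable (by fun_prop) _ _)
    · exact (Continuous.intervalIntegrable (by fun_prop) _ _)
  have hsum : Summable (fourierCoeff F) := by
    have : fourierCoeff F = fun m : ℤ =>
      (((2*π)⁻¹ * (∫ t in (0:ℝ)..2*π, f t * cos (m * t)) : ℝ) : ℂ) := funext hcoef
    rw [this]
    exact (Complex.hasSum_ofReal.mpr (hs.mul_left _).hasSum).summable
  have h := Complex.hasSum_re (has_pointwise_sum_fourier_series_of_summable hsum (x : AddCircle (2*π)))
  rw [hFx, Complex.ofReal_re] at h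
  convert h using 2 with m
  rw [hcoef, hcexp, smul_eq_mul, Complex.re_ofReal_mul]
  simp [-Complex.ofReal_cos, -Complex.ofReal_sin]

/-- The cosine series of a smooth symmetric periodic function converges absolutely. -/
lemma summable_coeff {g : ℝ → ℝ → ℝ} (hg : SPS g) : Summable fun k => |pr g (ee k)| := by
  obtain ⟨C, -, hC⟩ := coeff_decay 2 hg
  exact summable_of_decay hC

/-- Cosine expansion in two variables, by expanding first in `y` and then in `x`. -/
lemma expansion {g : ℝ → ℝ → ℝ} (hg : SPS g) (x y : ℝ) :
    HasSum (fun k : ℤ × ℤ => (4*π^2)⁻¹ * (pr g (ee k) * ee k x y)) (g x y) := by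
  let B : ℤ → ℝ → ℝ := fun n x => ∫ t in (0:ℝ)..2*π, g x t * cos (n * t)
  have hpi : π ≠ 0 := Real.pi_ne_zero
  have hBc : ∀ n, Continuous (B n) := by
    intro n
    refine intervalIntegral.continuous_parametric_intervalIntegral_of_continuous' ?_ 0 (2*π)
    have h1 : Continuous fun p : ℝ × ℝ => g p.1 p.2 := hg.cont
    exact h1.mul (by fun_prop)
  have hBint : ∀ m n : ℤ, ∫ t in (0:ℝ)..2*π, B n t * cos (m * t) = pr g (ee (m, n)) := by
    intro m n
    simp only [B, pr, integ2, ee, ← intervalIntegral.integral_mul_const]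
    congr; funext s; congr; funext t; ring
  have hcs : Summable fun k => pr g (ee k) := (summable_coeff hg).of_abs
  have hcs' : Summable fun k : ℤ × ℤ => pr g (ee (k.2, k.1)) :=
    (Equiv.prodComm ℤ ℤ).summable_iff.mpr hcs
  have hB : ∀ n, HasSum (fun m : ℤ => (2*π)⁻¹ * pr g (ee (m, n)) * cos (m * x)) (B n x) := by
    intro n
    have hs : Summable fun m : ℤ => ∫ t in (0:ℝ)..2*π, B n t * cos (m * t) := by
      simp only [hBint]
      exact hcs'.prod_factor n
    have h := hasSum_cos_1d (hBc n) (fun x => by simp only [B, (hg.per x _).1])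
      (fun x => by simp only [B, (hg.sym x _).1]) hs x
    simpa only [hBint] using h
  have hT : ∀ y, Summable fun k : ℤ × ℤ => (4*π^2)⁻¹ * (pr g (ee k) * ee k x y) := by
    intro y
    refine Summable.mul_left _ (Summable.of_norm_bounded (summable_coeff hg) fun k => ?_)
    rw [Real.norm_eq_abs, abs_mul]
    exact mul_le_of_le_one_right (abs_nonneg _) (ee_abs_le k x y)
  have key : ∀ y, HasSum (fun n : ℤ => (2*π)⁻¹ * B n x * cos (n * y))
      (∑' k : ℤ × ℤ, (4*π^2)⁻¹ * (pr g (ee k) * ee k x y)) := by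
    intro y
    have h1 : HasSum (fun k : ℤ × ℤ => (4*π^2)⁻¹ * (pr g (ee (k.2, k.1)) * ee (k.2, k.1) x y)) _ :=
      (Equiv.prodComm ℤ ℤ).hasSum_iff.mpr (hT y).hasSum
    refine h1.prod_fiberwise fun n => ?_
    have h2 := ((hB n).mul_left (2*π)⁻¹).mul_right (cos (n * y))
    have e : ∀ m : ℤ, (2*π)⁻¹ * ((2*π)⁻¹ * pr g (ee (m, n)) * cos (m * x)) * cos (n * y) =
        (4*π^2)⁻¹ * (pr g (ee (m, n)) * ee (m, n) x y) := by
      intro m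
      simp only [show ee (m, n) x y = cos (m * x) * cos (n * y) from rfl]
      field_simp
      ring
    simpa only [e] using h2
  -- at `y = 0` all the factors `cos (n y)` are `1`
  have hBs : Summable fun n => B n x := by
    have h0 := (key 0).summable.mul_left (2*π)
    have e : (fun n => B n x) = fun n : ℤ => 2*π * ((2*π)⁻¹ * B n x * cos (n * 0)) := by
      funext n
      rw [mul_zero, cos_zero]
      field_simp
    rw [e]
    exact h0
  have hfin := hasSum_cos_1d (hg.cont.snd x) (fun y => (hg.per x y).2) (fun y => (hg.sym x y).2) hBs y
  have := (key y).unique hfin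
  rw [← this]
  exact (hT y).hasSum

/-- Termwise integration of an absolutely convergent cosine series. -/
lemma pr_tsum {c : ℤ × ℤ → ℝ} (hc : Summable fun k => |c k|) {g : ℝ → ℝ → ℝ} (hg : Cont2 g) :
    HasSum (fun k => c k * pr (ee k) g)
      (integ2 fun x y => (∑' k, c k * ee k x y) * g x y) := by
  have hcont : Cont2 (fun x y => ∑' k, c k * ee k x y) := by
    refine continuous_tsum (fun k => ((ee_sps k).const_mul (c k)).cont) hc fun k p => ?_
    rw [Real.norm_eq_abs, abs_mul]
    exact mul_le_of_le_one_right (abs_nonneg _) (ee_abs_le k _ _)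
  rw [integ2_eq (hcont.mul hg)]
  have hF : ∀ k, Cont2 (fun x y => c k * ee k x y * g x y) := fun k =>
    ((ee_sps k).const_mul (c k)).cont.mul hg
  have h := hasSum_integral_of_summable_integral_norm (μ := volume.restrict sqr)
    (F := fun (k : ℤ × ℤ) (p : ℝ × ℝ) => c k * ee k p.1 p.2 * g p.1 p.2)
    (fun k => (hF k).integrableOn) ?_
  · have e1 : ∀ k, c k * pr (ee k) g = ∫ p in sqr, c k * ee k p.1 p.2 * g p.1 p.2 := by
      intro k
      rw [← integ2_eq (hF k), pr, ← integ2_const_mul]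
      congr; funext x y; ring
    simp only [e1, ← tsum_mul_right]
    exact h
  · refine Summable.of_nonneg_of_le (fun k => integral_nonneg fun p => norm_nonneg _) (fun k => ?_)
      (hc.mul_right (integ2 fun x y => |g x y|))
    rw [← integ2_const_mul, integ2_eq (hg.abs.const_mul _)]
    refine integral_mono (hF k).abs.integrableOn (hg.abs.const_mul _).integrableOn fun p => ?_
    simp only [Real.norm_eq_abs, abs_mul]
    refine mul_le_mul_of_nonneg_right ?_ (abs_nonneg _)
    exact mul_le_of_le_one_right (abs_nonneg _) (ee_abs_le k _ _)

/-- Parseval's identity, for a continuous and a smooth symmetric periodic function. -/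
lemma parseval {v g : ℝ → ℝ → ℝ} (hv : Cont2 v) (hg : SPS g) :
    HasSum (fun k => (4*π^2)⁻¹ * (pr v (ee k) * pr g (ee k))) (pr v g) := by
  have hc : Summable fun k => |(4*π^2)⁻¹ * pr g (ee k)| := by
    simp only [abs_mul]
    exact (summable_coeff hg).mul_left _
  have h := pr_tsum hc hv
  convert h using 1
  · funext k; rw [pr_comm v]; ring
  · rw [pr_comm]
    unfold pr
    congr; funext x y
    congr 1
    rw [← (expansion hg x y).tsum_eq]
    congr; funext k; unfold pr; ring

/-- A smooth symmetric periodic function is determined by its cosine coefficients. -/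
lemma eq_zero_of_coeff {g : ℝ → ℝ → ℝ} (hg : SPS g) (h : ∀ k, pr g (ee k) = 0) (x y : ℝ) :
    g x y = 0 := by
  have := expansion hg x y
  simp only [h, zero_mul, mul_zero] at this
  exact this.unique hasSum_zero

lemma eq_zero_of_pr_self {g : ℝ → ℝ → ℝ} (hg : SPS g) (h : pr g g = 0) (x y : ℝ) :
    g x y = 0 := by
  have hp := parseval hg.cont hg
  rw [h] at hp
  have h0 := (hasSum_zero_iff_of_nonneg (fun k => mul_nonneg (by positivity)
    (mul_self_nonneg _))).mp hp
  refine eq_zero_of_coeff hg (fun k => ?_) x y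
  have := congrFun h0 k
  simpa [Real.pi_ne_zero] using this

/-! ### Rapidly decreasing cosine series are smooth -/

/-- Superpolynomial decay of a double sequence. -/
def RapidDecay (c : ℤ × ℤ → ℝ) : Prop := ∀ N : ℕ, ∃ C, 0 ≤ C ∧ ∀ k, rho k ^ N * |c k| ≤ C

/-- The linear phase `(x, y) ↦ a x + b y`. -/
def phase (a b : ℝ) : ℝ × ℝ →L[ℝ] ℝ :=
  a • ContinuousLinearMap.fst ℝ ℝ ℝ + b • ContinuousLinearMap.snd ℝ ℝ ℝ

lemma phase_norm_le (a b : ℝ) : ‖phase a b‖ ≤ |a| + |b| := by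
  refine (norm_add_le _ _).trans ?_
  rw [norm_smul, norm_smul]
  gcongr
  · exact mul_le_of_le_one_right (norm_nonneg _) (ContinuousLinearMap.norm_fst_le ℝ ℝ ℝ)
  · exact mul_le_of_le_one_right (norm_nonneg _) (ContinuousLinearMap.norm_snd_le ℝ ℝ ℝ)

lemma norm_iteratedFDeriv_cos_phase (a b : ℝ) (i : ℕ) (p : ℝ × ℝ) :
    ‖iteratedFDeriv ℝ i (cos ∘ phase a b) p‖ ≤ (|a| + |b|) ^ i := by
  rw [(phase a b).iteratedFDeriv_comp_right (n := i) Real.contDiff_cos p le_rfl]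
  refine (ContinuousMultilinearMap.norm_compContinuousLinearMap_le _ _).trans ?_
  rw [norm_iteratedFDeriv_eq_norm_iteratedDeriv, Finset.prod_const, Finset.card_univ,
    Fintype.card_fin]
  calc _ ≤ 1 * ‖phase a b‖ ^ i := by
        gcongr
        exact Real.abs_iteratedDeriv_cos_le_one i _
    _ ≤ _ := by
        rw [one_mul]
        gcongr
        exact phase_norm_le a b

lemma ee_eq_phase (k : ℤ × ℤ) (c : ℝ) : (fun p : ℝ × ℝ => c * ee k p.1 p.2) =
    (c / 2) • (cos ∘ phase k.1 k.2) + (c / 2) • (cos ∘ phase k.1 (-k.2)) := by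
  funext p
  simp only [ee, phase, Pi.add_apply, Pi.smul_apply, Function.comp_apply, smul_eq_mul,
    add_apply, smul_apply, ContinuousLinearMap.coe_fst',
    ContinuousLinearMap.coe_snd', neg_mul, cos_add, cos_neg, sin_neg]
  ring

lemma norm_iteratedFDeriv_ee (k : ℤ × ℤ) (c : ℝ) (i : ℕ) (p : ℝ × ℝ) :
    ‖iteratedFDeriv ℝ i (fun p : ℝ × ℝ => c * ee k p.1 p.2) p‖ ≤ rho k ^ i * |c| := by
  have hd : ∀ a b : ℝ, ContDiffAt ℝ i (cos ∘ phase a b) p := fun a b =>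
    (Real.contDiff_cos.comp (phase a b).contDiff).contDiffAt
  have hr : |(k.1:ℝ)| + |(k.2:ℝ)| ≤ rho k := by
    unfold rho
    nlinarith [sq_nonneg (|(k.1:ℝ)| - 1), sq_nonneg (|(k.2:ℝ)| - 1), sq_abs (k.1:ℝ),
      sq_abs (k.2:ℝ), sq_nonneg (k.1:ℝ), sq_nonneg (k.2:ℝ)]
  have hb : ∀ b : ℝ, |b| = |(k.2:ℝ)| →
      ‖iteratedFDeriv ℝ i ((c / 2) • (cos ∘ phase k.1 b)) p‖ ≤ |c| / 2 * rho k ^ i := by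
    intro b hb
    rw [iteratedFDeriv_const_smul_apply (hd _ _), norm_smul, Real.norm_eq_abs, abs_div,
      abs_of_pos (two_pos : (0:ℝ) < 2)]
    gcongr
    refine (norm_iteratedFDeriv_cos_phase _ _ i p).trans ?_
    rw [hb]
    gcongr
  have hd' : ∀ a b : ℝ, ContDiffAt ℝ i ((c / 2) • (cos ∘ phase a b)) p := fun a b =>
    (hd a b).const_smul (c / 2)
  rw [ee_eq_phase, iteratedFDeriv_add_apply (hd' _ _) (hd' _ _)]
  refine (norm_add_le _ _).trans ?_
  have h1 := hb (k.2) rfl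
  have h2 := hb (-k.2) (abs_neg _)
  linarith

lemma RapidDecay.summable {c : ℤ × ℤ → ℝ} (hc : RapidDecay c) (i : ℕ) :
    Summable fun k => rho k ^ i * |c k| := by
  obtain ⟨C, -, hC⟩ := hc (2 + i)
  have h := summable_of_decay (c := fun k => rho k ^ i * |c k|) (C := C) fun k => ?_
  · refine h.congr fun k => abs_of_nonneg ?_
    have := rho_pos k
    positivity
  · have := rho_pos k
    rw [abs_of_nonneg (by positivity), ← mul_assoc, ← pow_add]
    exact hC k

lemma RapidDecay.sps {c : ℤ × ℤ → ℝ} (hc : RapidDecay c) :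
    SPS (fun x y => ∑' k, c k * ee k x y) where
  smooth := contDiff_tsum (fun k => ((ee_sps k).const_mul (c k)).smooth)
    (fun i _ => hc.summable i) (fun i k p _ => norm_iteratedFDeriv_ee k (c k) i p)
  per x y := by simp only [fun k => ((ee_sps k).per x y).1, fun k => ((ee_sps k).per x y).2, and_self]
  sym x y := by simp only [fun k => ((ee_sps k).sym x y).1, fun k => ((ee_sps k).sym x y).2, and_self]

/-! ### Elliptic regularity in frequency space -/

/-- The frequency `k + (u j₁, v j₂)` for a choice of signs `u`, `v`. -/
def tw (u v : ℤˣ) (k j : ℤ × ℤ) : ℤ × ℤ := (k.1 + u * j.1, k.2 + v * j.2)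

lemma hasSum_tw (u v : ℤˣ) (k : ℤ × ℤ) {r : ℤ × ℤ → ℝ} {R : ℝ} (hr : HasSum r R) :
    HasSum (fun j => r (tw u v k j)) R :=
  (Equiv.prodCongr ((Units.mulLeft u).trans (Equiv.addLeft k.1))
    ((Units.mulLeft v).trans (Equiv.addLeft k.2))).hasSum_iff.mpr hr

lemma unit_sq (u : ℤˣ) : ((u : ℤ) : ℝ)^2 = 1 := by
  rcases Int.units_eq_one_or u with rfl | rfl <;> simp

/-- Peetre's inequality for the weight `1 + |k|²`. -/
lemma peetre (u v : ℤˣ) (k j : ℤ × ℤ) : rho k ≤ 2 * rho j * rho (tw u v k j) := by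
  have key : ∀ a b e : ℝ, e^2 = 1 → a^2 ≤ 2 * b^2 + 2 * (a + e * b)^2 := by
    intro a b e he
    have : (e * b)^2 = b^2 := by rw [mul_pow, he, one_mul]
    nlinarith [sq_nonneg (a + 2 * (e * b))]
  have h1 := key k.1 j.1 _ (unit_sq u)
  have h2 := key k.2 j.2 _ (unit_sq v)
  unfold rho tw
  push_cast
  generalize ((k.1:ℝ) + (u:ℤ) * j.1) = X at *
  generalize ((k.2:ℝ) + (v:ℤ) * j.2) = Y at *
  have : 0 ≤ ((j.1:ℝ)^2 + (j.2:ℝ)^2) * (X^2 + Y^2) := by positivity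
  nlinarith

lemma ee_mul_ee (j k : ℤ × ℤ) (x y : ℝ) : ee j x y * ee k x y =
    4⁻¹ * (ee (tw 1 1 k j) x y + ee (tw 1 (-1) k j) x y + ee (tw (-1) 1 k j) x y
      + ee (tw (-1) (-1) k j) x y) := by
  simp only [ee, tw, Units.val_one, Units.val_neg]
  push_cast
  simp only [add_mul, one_mul, neg_mul, cos_add, cos_neg, sin_neg]
  ring

lemma pr_ee_W_ee {W : ℝ → ℝ → ℝ} (hW : SPS W) (j k : ℤ × ℤ) :
    pr (ee j) (fun x y => W x y * ee k x y) =
      4⁻¹ * (pr W (ee (tw 1 1 k j)) + pr W (ee (tw 1 (-1) k j)) + pr W (ee (tw (-1) 1 k j))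
        + pr W (ee (tw (-1) (-1) k j))) := by
  have e : pr (ee j) (fun x y => W x y * ee k x y) =
      pr W (fun x y => 4⁻¹ * (ee (tw 1 1 k j) x y + ee (tw 1 (-1) k j) x y + ee (tw (-1) 1 k j) x y
      + ee (tw (-1) (-1) k j) x y)) := by
    simp only [← ee_mul_ee]
    unfold pr
    congr; funext x y; ring
  have c := fun k => (ee_sps k).cont
  rw [e, pr_const_mul_right, pr_add_right (((c _).add (c _)).add (c _)) (c _) hW.cont,
    pr_add_right ((c _).add (c _)) (c _) hW.cont, pr_add_right (c _) (c _) hW.cont]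

/-- One gain of two derivatives: the equation `|k|² c = -(Ŵ * c)/(4π²)` improves decay of order
`s` of `c` to decay of order `s + 1` (in powers of `1 + |k|²`). -/
lemma bootstrap_step {W : ℝ → ℝ → ℝ} (hW : SPS W) {c : ℤ × ℤ → ℝ}
    (heq : ∀ k, (rho k - 1) * c k =
      - ((4*π^2)⁻¹ * ∑' j, c j * pr (ee j) (fun x y => W x y * ee k x y)))
    (s : ℕ) (hs : ∃ C, 0 ≤ C ∧ ∀ k, rho k ^ s * |c k| ≤ C) :
    ∃ C, 0 ≤ C ∧ ∀ k, rho k ^ (s+1) * |c k| ≤ C := by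
  obtain ⟨C, hC0, hC⟩ := hs
  obtain ⟨D, hD0, hD⟩ := coeff_decay (s+2) hW
  set R := ∑' k : ℤ × ℤ, (rho k ^ 2)⁻¹ with hR
  have hRs : HasSum (fun k : ℤ × ℤ => (rho k ^ 2)⁻¹) R := summable_rho.hasSum
  have hR0 : 0 ≤ R := tsum_nonneg fun k => by have := rho_pos k; positivity
  have hterm : ∀ (u v : ℤˣ) (k j : ℤ × ℤ), rho k ^ s * (|c j| * |pr W (ee (tw u v k j))|) ≤
      2^s * C * D * (rho (tw u v k j) ^ 2)⁻¹ := by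
    intro u v k j
    have p1 := rho_pos k
    have p2 := rho_pos j
    have p3 := rho_pos (tw u v k j)
    have hD' := hD (tw u v k j)
    set w := |pr W (ee (tw u v k j))|
    have hw : 0 ≤ w := abs_nonneg _
    set q := rho (tw u v k j)
    have h1 : rho k ^ s ≤ (2 * rho j * q) ^ s := pow_le_pow_left₀ p1.le (peetre u v k j) s
    rw [← div_eq_mul_inv, le_div_iff₀ (by positivity)]
    calc rho k ^ s * (|c j| * w) * q^2
        ≤ (2 * rho j * q) ^ s * (|c j| * w) * q^2 := by gcongr
      _ = 2^s * (rho j ^ s * |c j|) * (q^(s+2) * w) := by rw [mul_pow, mul_pow]; ring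
      _ ≤ 2^s * C * D := by
        have := hC j
        gcongr
  have hsum : ∀ k, rho k ^ s * |∑' j, c j * pr (ee j) (fun x y => W x y * ee k x y)| ≤
      2^s * C * D * R := by
    intro k
    have p1 := rho_pos k
    have hS := ((((hasSum_tw 1 1 k hRs).add (hasSum_tw 1 (-1) k hRs)).add
      (hasSum_tw (-1) 1 k hRs)).add (hasSum_tw (-1) (-1) k hRs)).mul_left (4⁻¹ * (2^s * C * D))
    have e : 4⁻¹ * (2^s * C * D) * (R + R + R + R) = 2^s * C * D * R := by ring
    rw [e] at hS
    rw [← abs_of_pos (pow_pos p1 s), ← abs_mul, ← tsum_mul_left, ← Real.norm_eq_abs]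
    refine tsum_of_norm_bounded hS fun j => ?_
    rw [pr_ee_W_ee hW, Real.norm_eq_abs, abs_mul, abs_mul, abs_mul, abs_of_pos (pow_pos p1 s),
      abs_of_pos (by norm_num : (0:ℝ) < 4⁻¹)]
    have t1 := hterm 1 1 k j
    have t2 := hterm 1 (-1) k j
    have t3 := hterm (-1) 1 k j
    have t4 := hterm (-1) (-1) k j
    have hab : ∀ a b c d : ℝ, |a + b + c + d| ≤ |a| + |b| + |c| + |d| := fun a b c d =>
      (abs_add_le _ _).trans (by have := abs_add_three a b c; linarith)
    have h4 := hab (pr W (ee (tw 1 1 k j))) (pr W (ee (tw 1 (-1) k j))) (pr W (ee (tw (-1) 1 k j)))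
        (pr W (ee (tw (-1) (-1) k j)))
    have h5 := mul_le_mul_of_nonneg_left h4 (mul_nonneg (pow_pos p1 s).le (abs_nonneg (c j)))
    linarith
  refine ⟨C + (4*π^2)⁻¹ * (2^s * C * D * R), by positivity, fun k => ?_⟩
  have p1 := rho_pos k
  have h1 : rho k ^ (s+1) * |c k| = rho k ^ s * |c k| + rho k ^ s * |(rho k - 1) * c k| := by
    rw [abs_mul, abs_of_nonneg (sub_nonneg.mpr (rho_ge_one k))]; ring
  rw [h1, heq k, abs_neg, abs_mul, abs_of_pos (by positivity : 0 < (4*π^2)⁻¹)]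
  have h2 := mul_le_mul_of_nonneg_left (hsum k) (by positivity : 0 ≤ (4*π^2)⁻¹)
  linarith [hC k]

/-- A bounded solution of the Fourier-transformed equation is rapidly decreasing. -/
lemma bootstrap {W : ℝ → ℝ → ℝ} (hW : SPS W) {c : ℤ × ℤ → ℝ} {B : ℝ} (hB : ∀ k, |c k| ≤ B)
    (heq : ∀ k, (rho k - 1) * c k =
      - ((4*π^2)⁻¹ * ∑' j, c j * pr (ee j) (fun x y => W x y * ee k x y))) :
    RapidDecay c := by
  intro N
  induction N with
  | zero => exact ⟨B, (abs_nonneg _).trans (hB 0), fun k => by simpa using hB k⟩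
  | succ s ih => exact bootstrap_step hW heq s ih

/-! ### The quadratic form -/

/-- The Schrödinger operator `-Δ + W`. -/
def schr (W v : ℝ → ℝ → ℝ) (x y : ℝ) : ℝ := (-1) * lap v x y + W x y * v x y

/-- The quadratic form `∫ |∇v|² + W v²`. -/
def qf (W v : ℝ → ℝ → ℝ) : ℝ :=
  integ2 (fun x y => (pdx v x y)^2 + (pdy v x y)^2 + W x y * (v x y)^2)

lemma schr_sps {W v : ℝ → ℝ → ℝ} (hW : SPS W) (hv : SPS v) : SPS (schr W v) :=
  (hv.lap.const_mul (-1)).add (hW.mul hv)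

lemma pr_schr {W v : ℝ → ℝ → ℝ} (hW : SPS W) (hv : SPS v) {u : ℝ → ℝ → ℝ} (hu : SPS u) :
    pr u (schr W v) = - pr u (lap v) + pr u (fun x y => W x y * v x y) := by
  have : pr u (schr W v) = pr u (fun x y => (-1) * lap v x y) + pr u (fun x y => W x y * v x y) :=
    pr_add_right (hv.lap.const_mul (-1)).cont (hW.mul hv).cont hu.cont
  rw [this, pr_const_mul_right]; ring

lemma qf_eq {W v : ℝ → ℝ → ℝ} (hW : SPS W) (hv : SPS v) : qf W v = pr v (schr W v) := by
  rw [pr_schr hW hv hv, ← green hv hv, pr, ← integ2_add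
    ((hv.smooth.pdx.cont2.mul hv.smooth.pdx.cont2).add (hv.smooth.pdy.cont2.mul hv.smooth.pdy.cont2))
    (hv.cont.mul (hW.mul hv).cont)]
  unfold qf
  congr; funext x y; ring

lemma schr_symm {W u v : ℝ → ℝ → ℝ} (hW : SPS W) (hu : SPS u) (hv : SPS v) :
    pr (schr W u) v = pr u (schr W v) := by
  rw [pr_comm, pr_schr hW hu hv, pr_schr hW hv hu, ← pr_lap_comm hu hv, pr_comm v (lap u)]
  congr 1
  unfold pr
  congr; funext x y; ring

/-- Cauchy–Schwarz for the nonnegative form `qf`. -/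
lemma schr_cauchy {W u v : ℝ → ℝ → ℝ} (hW : SPS W) (hu : SPS u) (hv : SPS v)
    (hq : ∀ v, SPS v → 0 ≤ qf W v) : (pr u (schr W v))^2 ≤ qf W u * qf W v := by
  have key : ∀ t : ℝ, 0 ≤ qf W v * (t * t) + (2 * pr u (schr W v)) * t + qf W u := by
    intro t
    have htv := hv.const_mul t
    have h := hq _ (hu.add htv)
    rw [qf_eq hW (hu.add htv), pr_add_left hu.cont htv.cont (schr_sps hW (hu.add htv)).cont,
      pr_const_mul_left, ← schr_symm hW hu (hu.add htv), ← schr_symm hW hv (hu.add htv),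
      pr_add_right hu.cont htv.cont (schr_sps hW hu).cont,
      pr_add_right hu.cont htv.cont (schr_sps hW hv).cont, pr_const_mul_right, pr_const_mul_right,
      schr_symm hW hu hv, schr_symm hW hu hu, schr_symm hW hv hv, pr_comm (schr W v) u,
      ← qf_eq hW hu, ← qf_eq hW hv] at h
    linarith
  have := discrim_le_zero key
  unfold discrim at this
  nlinarith

lemma qf_const_mul {W v : ℝ → ℝ → ℝ} (hW : SPS W) (hv : SPS v) (t : ℝ) :
    qf W (fun x y => t * v x y) = t^2 * qf W v := by
  rw [qf_eq hW (hv.const_mul t), pr_const_mul_left, ← schr_symm hW hv (hv.const_mul t),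
    pr_const_mul_right, schr_symm hW hv hv, ← qf_eq hW hv]
  ring

lemma pr_schr_ee {W v : ℝ → ℝ → ℝ} (hW : SPS W) (hv : SPS v) (k : ℤ × ℤ) :
    pr v (schr W (ee k)) =
      (rho k - 1) * pr v (ee k) + pr v (fun x y => W x y * ee k x y) := by
  have h : lap (ee k) = fun x y => - (rho k - 1) * ee k x y := by funext x y; exact lap_ee k x y
  rw [pr_schr hW (ee_sps k) hv, h, pr_const_mul_right]
  ring

/-! ### A priori bounds on normalised functions -/

lemma abs_coeff_le {v : ℝ → ℝ → ℝ} (hv : SPS v) (h1 : pr v v = 1) (k : ℤ × ℤ) :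
    |pr v (ee k)| ≤ (1 + 4*π^2) / 2 := by
  have hc : Cont2 (fun _ _ => (1:ℝ)) := continuous_const
  have h2 := (hv.cont.mul hv.cont).add hc
  refine (abs_pr_ee_le hv.cont k).trans ((integ2_mono hv.cont.abs (h2.const_mul 2⁻¹)
    fun x y => ?_).trans_eq ?_)
  · nlinarith [sq_nonneg (|v x y| - 1), sq_abs (v x y)]
  · rw [integ2_const_mul, integ2_add (hv.cont.mul hv.cont) hc, integ2_const]
    change 2⁻¹ * (pr v v + _) = _
    rw [h1]; ring

lemma abs_pr_mul_le {W : ℝ → ℝ → ℝ} (hW : SPS W) : ∃ M, 0 ≤ M ∧ ∀ v, SPS v →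
    |pr v (fun x y => W x y * v x y)| ≤ M * pr v v := by
  obtain ⟨M, hM0, hM⟩ := hW.cont.bounded
  refine ⟨M, hM0, fun v hv => ?_⟩
  have h1 := hv.cont.mul (hW.mul hv).cont
  have h2 := (hv.cont.mul hv.cont).const_mul M
  refine (abs_integ2_le h1).trans ?_
  rw [pr, ← integ2_const_mul, integ2_eq h1.abs, integ2_eq h2]
  refine setIntegral_mono_on h1.abs.integrableOn h2.integrableOn sqr_compact.measurableSet
    fun p hp => ?_
  have := mul_le_mul_of_nonneg_right (hM p hp) (mul_self_nonneg (v p.1 p.2))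
  rw [abs_mul, abs_mul, ← abs_mul_abs_self (v p.1 p.2)]
  rw [← abs_mul_abs_self (v p.1 p.2)] at this
  linarith

lemma finite_rho_le (K : ℝ) : {k | rho k ≤ K}.Finite := by
  by_cases hK : 0 < K
  · have h := summable_rho.tendsto_cofinite_zero.eventually_lt_const
      (by positivity : 0 < (K^2)⁻¹)
    rw [eventually_cofinite] at h
    refine h.subset fun k hk => ?_
    have := rho_pos k
    simp only [Set.mem_ofPred_eq, not_lt] at hk ⊢
    gcongr
  · refine Set.finite_empty.subset fun k hk => hK ((rho_pos k).trans_le hk)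

/-- Compactness: a fixed finite set of modes carries at least half of the mass of every
normalised function whose energy is at most `1`. -/
lemma low_modes {W : ℝ → ℝ → ℝ} (hW : SPS W) : ∃ S : Finset (ℤ × ℤ), ∀ v, SPS v →
    pr v v = 1 → qf W v ≤ 1 → 1/2 ≤ ∑ k ∈ S, (4*π^2)⁻¹ * (pr v (ee k))^2 := by
  obtain ⟨M, hM0, hM⟩ := abs_pr_mul_le hW
  set K := 2 + M with hK
  have hK0 : 0 < K := by positivity
  refine ⟨(finite_rho_le (2*K)).toFinset, fun v hv h1 hq => ?_⟩
  set S := (finite_rho_le (2*K)).toFinset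
  have e1 := parseval hv.cont hv
  rw [h1] at e1
  have hg := hv.add (hv.lap.const_mul (-1))
  have e2 := parseval hv.cont hg
  simp only [pr_one_sub_lap_ee hv] at e2
  rw [pr_add_right hv.cont (hv.lap.const_mul (-1)).cont hv.cont, pr_const_mul_right, h1] at e2
  have hE : 1 + -1 * pr v (lap v) ≤ K := by
    rw [qf_eq hW hv, pr_schr hW hv hv] at hq
    have := (abs_le.mp (hM v hv)).1
    rw [h1] at this
    linarith
  have e3 : HasSum (fun k => if k ∈ S then (4*π^2)⁻¹ * (pr v (ee k))^2 else 0)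
      (∑ k ∈ S, (4*π^2)⁻¹ * (pr v (ee k))^2) := by
    have : HasSum (fun k => if k ∈ S then (4*π^2)⁻¹ * (pr v (ee k))^2 else 0)
        (∑ k ∈ S, if k ∈ S then (4*π^2)⁻¹ * (pr v (ee k))^2 else 0) :=
      hasSum_sum_of_ne_finset_zero (fun k hk => by simp [hk])
    rwa [Finset.sum_congr rfl (fun k hk => if_pos hk)] at this
  -- outside `S` the weight satisfies `1 ≤ rho k / (2K)`, so the tail has mass at most `K / (2K)`
  have h := hasSum_le (fun k => ?_) e1 (e3.add (e2.mul_left (2*K)⁻¹))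
  · have : (2*K)⁻¹ * (1 + -1 * pr v (lap v)) ≤ 1/2 := by
      calc _ ≤ (2*K)⁻¹ * K := by gcongr
        _ = 1/2 := by field_simp
    linarith
  · have hp : 0 ≤ (4*π^2)⁻¹ * (pr v (ee k) * pr v (ee k)) :=
      mul_nonneg (by positivity) (mul_self_nonneg _)
    by_cases hk : k ∈ S
    · have := rho_pos k
      have h5 : 0 ≤ (2*K)⁻¹ * (rho k * ((4*π^2)⁻¹ * (pr v (ee k) * pr v (ee k)))) := by positivity
      simp only [hk, if_true]
      linarith
    · simp only [hk, if_false, zero_add]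
      have hk' : 2*K < rho k := by simpa [S] using hk
      have h5 : 1 ≤ (2*K)⁻¹ * rho k := by
        rw [inv_mul_eq_div, one_le_div (by positivity)]; exact hk'.le
      have := mul_le_mul_of_nonneg_right h5 hp
      linarith

/-! ### The limit of a minimising sequence -/

/-- No normalised sequence orthogonal to `φ` has energies bounded by `1 / (n + 1)`. -/
lemma no_minimising {W φ : ℝ → ℝ → ℝ} (hW : SPS W) (hφ : SPS φ)
    (hq : ∀ v, SPS v → 0 ≤ qf W v)
    (hker : ∀ v, SPS v → (∀ x y, schr W v x y = 0) → ∃ α : ℝ, ∀ x y, v x y = α * φ x y)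
    (v : ℕ → ℝ → ℝ → ℝ) (hv : ∀ n, SPS (v n)) (h1 : ∀ n, pr (v n) (v n) = 1)
    (hφv : ∀ n, pr (v n) φ = 0) (hsmall : ∀ n : ℕ, qf W (v n) ≤ 1 / ((n:ℝ) + 1)) : False := by
  set U := hyperfilter ℕ
  set B : ℝ := (1 + 4*π^2) / 2
  have hB : ∀ n k, |pr (v n) (ee k)| ≤ B := fun n k => abs_coeff_le (hv n) (h1 n) k
  -- coefficientwise limits along a nonprincipal ultrafilter
  have hlim : ∀ k, ∃ a ∈ Set.Icc (-B) B, Tendsto (fun n => pr (v n) (ee k)) U (nhds a) := by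
    intro k
    refine isCompact_Icc.ultrafilter_le_nhds (U.map fun n => pr (v n) (ee k)) ?_
    rw [le_principal_iff, Ultrafilter.coe_map, mem_map]
    exact univ_mem' fun n => abs_le.mp (hB n k)
  choose c hcB hc using hlim
  have hcB' : ∀ k, |c k| ≤ B := fun k => abs_le.mpr (hcB k)
  set Λ : (ℝ → ℝ → ℝ) → ℝ := fun g => ∑' k, (4*π^2)⁻¹ * (c k * pr g (ee k)) with hΛ
  have hweak : ∀ g, SPS g → Tendsto (fun n => pr (v n) g) U (nhds (Λ g)) := by
    intro g hg
    have : (fun n => pr (v n) g) =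
        fun n => ∑' k, (4*π^2)⁻¹ * (pr (v n) (ee k) * pr g (ee k)) := by
      funext n; exact (parseval (hv n).cont hg).tsum_eq.symm
    rw [this]
    refine tendsto_tsum_of_dominated_convergence
      (bound := fun k => (4*π^2)⁻¹ * (B * |pr g (ee k)|))
      (((summable_coeff hg).mul_left _).mul_left _)
      (fun k => ((hc k).mul_const _).const_mul _) (Eventually.of_forall fun n k => ?_)
    rw [Real.norm_eq_abs, abs_mul, abs_mul, abs_of_pos (by positivity : 0 < (4*π^2)⁻¹)]
    gcongr
    exact hB n k
  have hq0 : Tendsto (fun n => qf W (v n)) U (nhds 0) :=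
    (squeeze_zero (fun n => hq _ (hv n)) hsmall
      tendsto_one_div_add_atTop_nhds_zero_nat).mono_left Nat.hyperfilter_le_atTop
  have hschr : ∀ k, Tendsto (fun n => pr (v n) (schr W (ee k))) U (nhds 0) := by
    intro k
    have h2 : Tendsto (fun n => (pr (v n) (schr W (ee k)))^2) U (nhds 0) := by
      have := hq0.mul_const (qf W (ee k))
      rw [zero_mul] at this
      exact squeeze_zero (fun n => sq_nonneg _)
        (fun n => schr_cauchy hW (hv n) (ee_sps k) hq) this
    have h3 := h2.sqrt
    simp only [Real.sqrt_sq_eq_abs, Real.sqrt_zero] at h3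
    exact (tendsto_zero_iff_abs_tendsto_zero _).mpr h3
  have hΛschr : ∀ k, Λ (schr W (ee k)) = 0 := fun k =>
    tendsto_nhds_unique (hweak _ (schr_sps hW (ee_sps k))) (hschr k)
  have hΛφ : Λ φ = 0 := by
    refine tendsto_nhds_unique (hweak φ hφ) ?_
    simp only [hφv]
    exact tendsto_const_nhds
  have hΛee : ∀ k, Λ (ee k) = c k := fun k =>
    tendsto_nhds_unique (hweak _ (ee_sps k)) (hc k)
  -- the limit coefficients solve the equation in frequency space
  have heq : ∀ k, (rho k - 1) * c k =
      - ((4*π^2)⁻¹ * ∑' j, c j * pr (ee j) (fun x y => W x y * ee k x y)) := by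
    intro k
    have h2 := ((hc k).const_mul (rho k - 1)).add (hweak _ (hW.mul (ee_sps k)))
    simp only [← pr_schr_ee hW (hv _) k] at h2
    have h3 := tendsto_nhds_unique h2 (hschr k)
    have h4 : Λ (fun x y => W x y * ee k x y) =
        (4*π^2)⁻¹ * ∑' j, c j * pr (ee j) (fun x y => W x y * ee k x y) := by
      simp only [hΛ, tsum_mul_left, pr_comm (fun x y => W x y * ee k x y)]
    rw [← h4]; linarith
  have hdec : RapidDecay c := bootstrap hW hcB' heq
  set V : ℝ → ℝ → ℝ := fun x y => ∑' k, c k * ee k x y with hV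
  have hVs : SPS V := hdec.sps
  have hcs : Summable fun k => |c k| := by simpa using hdec.summable 0
  have hpi : π ≠ 0 := Real.pi_ne_zero
  have hVpr : ∀ g, SPS g → pr V g = 4*π^2 * Λ g := by
    intro g hg
    have h2 : pr V g = ∑' k, c k * pr (ee k) g := (pr_tsum hcs hg.cont).tsum_eq.symm
    rw [h2]
    simp only [hΛ, tsum_mul_left, pr_comm g]
    field_simp
  have hVeq : ∀ x y, schr W V x y = 0 := by
    refine eq_zero_of_coeff (schr_sps hW hVs) fun k => ?_
    rw [schr_symm hW hVs (ee_sps k), hVpr _ (schr_sps hW (ee_sps k)), hΛschr, mul_zero]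
  obtain ⟨α, hα⟩ := hker V hVs hVeq
  have hVV : pr V V = 0 := by
    have e : V = fun x y => α * φ x y := by funext x y; exact hα x y
    calc pr V V = pr V (fun x y => α * φ x y) := by rw [← e]
      _ = 0 := by rw [pr_const_mul_right, hVpr φ hφ, hΛφ, mul_zero, mul_zero]
  have hV0 := eq_zero_of_pr_self hVs hVV
  have hc0 : ∀ k, c k = 0 := by
    intro k
    have h2 := hVpr _ (ee_sps k)
    have h3 : pr V (ee k) = 0 := by simp [pr, hV0, integ2]
    rw [h3, hΛee] at h2
    simpa [hpi] using h2.symm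
  -- strong convergence on the low modes contradicts `c = 0`
  obtain ⟨S, hS⟩ := low_modes hW
  have h2 : Tendsto (fun n => ∑ k ∈ S, (4*π^2)⁻¹ * (pr (v n) (ee k))^2) U
      (nhds (∑ k ∈ S, (4*π^2)⁻¹ * (c k)^2)) :=
    tendsto_finsetSum _ fun k _ => ((hc k).pow 2).const_mul _
  have h3 : (1/2 : ℝ) ≤ ∑ k ∈ S, (4*π^2)⁻¹ * (c k)^2 := by
    refine ge_of_tendsto' h2 fun n => hS _ (hv n) (h1 n) ((hsmall n).trans ?_)
    rw [div_le_one (by positivity)]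
    linarith [(Nat.cast_nonneg n : (0:ℝ) ≤ n)]
  simp only [hc0] at h3
  norm_num at h3

/-- Coercivity of 𝓛₂ = −Δ + W on the orthogonal complement of its one-dimensional
kernel span{φ}: the quadratic form is bounded below by δ‖v‖² on {v : ∫vφ = 0}. -/
theorem coercivity_on_orthogonal_complement (W : ℝ → ℝ → ℝ)
    (hWs : Smooth2 W) (hWper : DblPeriodic W) (hWsym : SymFun W)
    (φ : ℝ → ℝ → ℝ) (hφs : Smooth2 φ) (hφper : DblPeriodic φ) (hφsym : SymFun φ)
    (hφne : ∃ x y : ℝ, φ x y ≠ 0)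
    (hφeq : ∀ x y : ℝ, -(lap φ x y) + W x y * φ x y = 0)
    (hnonneg : ∀ v : ℝ → ℝ → ℝ, Smooth2 v → DblPeriodic v → SymFun v →
      0 ≤ integ2 (fun x y => (pdx v x y)^2 + (pdy v x y)^2 + W x y * (v x y)^2))
    (hker : ∀ v : ℝ → ℝ → ℝ, Smooth2 v → DblPeriodic v → SymFun v →
      (∀ x y : ℝ, -(lap v x y) + W x y * v x y = 0) →
      ∃ α : ℝ, ∀ x y : ℝ, v x y = α * φ x y) :
    ∃ δ > (0:ℝ), ∀ v : ℝ → ℝ → ℝ, Smooth2 v → DblPeriodic v → SymFun v →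
      integ2 (fun x y => v x y * φ x y) = 0 →
      δ * integ2 (fun x y => (v x y)^2) ≤
        integ2 (fun x y => (pdx v x y)^2 + (pdy v x y)^2 + W x y * (v x y)^2) := by
  have hW : SPS W := ⟨hWs, hWper, hWsym⟩
  have hφ : SPS φ := ⟨hφs, hφper, hφsym⟩
  have hq : ∀ v, SPS v → 0 ≤ qf W v := fun v hv => hnonneg v hv.smooth hv.per hv.sym
  by_contra! hcon
  have hseq : ∀ n : ℕ, ∃ v, SPS v ∧ pr v v = 1 ∧ pr v φ = 0 ∧ qf W v ≤ 1 / ((n:ℝ) + 1) := by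
    intro n
    have hδ : (0:ℝ) < 1 / ((n:ℝ) + 1) := by positivity
    obtain ⟨v, hs, hp, hsy, horth, hlt⟩ := hcon _ hδ
    have hv : SPS v := ⟨hs, hp, hsy⟩
    have e : integ2 (fun x y => (v x y)^2) = pr v v := by
      unfold pr; congr; funext x y; ring
    rw [e] at hlt
    change qf W v < _ at hlt
    have hN : 0 < pr v v := by
      have := (hq v hv).trans_lt hlt
      exact (mul_pos_iff_of_pos_left hδ).mp this
    set N := pr v v with hNdef
    have ht : (Real.sqrt N)⁻¹ ^ 2 = N⁻¹ := by rw [inv_pow, Real.sq_sqrt hN.le]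
    refine ⟨fun x y => (Real.sqrt N)⁻¹ * v x y, hv.const_mul _, ?_, ?_, ?_⟩
    · rw [pr_const_mul_left, pr_const_mul_right, ← mul_assoc, ← sq, ht, ← hNdef,
        inv_mul_cancel₀ hN.ne']
    · rw [pr_const_mul_left]
      change _ * integ2 (fun x y => v x y * φ x y) = 0
      rw [horth, mul_zero]
    · rw [qf_const_mul hW hv, ht, inv_mul_le_iff₀ hN, mul_comm]
      exact hlt.le
  choose v hv h1 h2 h3 using hseq
  refine no_minimising hW hφ hq (fun v hv hsol => ?_) v hv h1 h2 h3
  refine hker v hv.smooth hv.per hv.sym fun x y => ?_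
  rw [← hsol x y]
  unfold schr
  ring
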